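/- Fix an infinite alphabet Σ and a distinguished letter # ∈ Σ. Let L_diff be the set of words over Σ all of whose letters are pairwise distinct, and let L_⊇ = { ψ#ω : ψ, ω ∈ L_diff, [ω] ⊆ [ψ], and # ∉ [ψ] ∪ [ω] }, where [σ] denotes the set of letters occurring in the word σ. Then there is no one-register alternating finite-memory automaton A over Σ with L(A) = L_⊇. -/

import Mathlib

/-- A one-register alternating finite-memory automaton over the alphabet `Sigma`,
with states `S`. -/
structure AFMA (Sigma : Type) (S : Type) where
  s0 : S
  F : Set S
  Δ : Finset Sigma
  θ0 : Sigma
  θ0_notin : θ0 ∉ Δ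
  μΔ : S → Sigma → Set (Set S)
  μeq : S → Set (Set S)
  μne : S → Set (Set S × Set S)

namespace AFMA

variable {Sigma S : Type}

open Classical

/-- The induced transition function `μ^c` on a configuration `c` and a letter `σ`:
a set of sets of configurations. -/
noncomputable def muC (A : AFMA Sigma S) (c : S × Sigma) (σ : Sigma) : Set (Set (S × Sigma)) :=
  if σ ∈ A.Δ then {D | ∃ Q ∈ A.μΔ c.1 σ, D = Q ×ˢ ({c.2} : Set Sigma)}
  else if σ = c.2 then {D | ∃ Q ∈ A.μeq c.1, D = Q ×ˢ ({c.2} : Set Sigma)}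
  else {D | ∃ p ∈ A.μne c.1, D = p.1 ×ˢ ({c.2} : Set Sigma) ∪ p.2 ×ˢ ({σ} : Set Sigma)}

/-- `SetStep A C σ C'` : `C' ∈ μ^c(C, σ)`, i.e. `C'` is a union, over all `c ∈ C`,
of chosen elements of `μ^c(c, σ)`. -/
def SetStep (A : AFMA Sigma S) (C : Set (S × Sigma)) (σ : Sigma)
    (C' : Set (S × Sigma)) : Prop :=
  ∃ g : S × Sigma → Set (S × Sigma),
    (∀ c ∈ C, g c ∈ A.muC c σ) ∧ C' = ⋃ c ∈ C, g c

/-- `Steps A C w C'` : reading the word `w` from the configuration set `C`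
the automaton can reach the configuration set `C'`. -/
inductive Steps (A : AFMA Sigma S) :
    Set (S × Sigma) → List Sigma → Set (S × Sigma) → Prop
  | nil (C) : Steps A C [] C
  | cons {C C' C'' σ w} : A.SetStep C σ C' → Steps A C' w C'' → Steps A C (σ :: w) C''

/-- A set of configurations is accepting if all its states are accepting. -/
def Accepting (A : AFMA Sigma S) (C : Set (S × Sigma)) : Prop :=
  ∀ c ∈ C, c.1 ∈ A.F

/-- The language accepted by `A`. -/
def Lang (A : AFMA Sigma S) : Set (List Sigma) :=
  {w | ∃ C, A.Steps {(A.s0, A.θ0)} w C ∧ A.Accepting C}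

/-- The action of a permutation of the alphabet on a set of configurations. -/
def mapConfigs (α : Equiv.Perm Sigma) (C : Set (S × Sigma)) : Set (S × Sigma) :=
  (fun c => (c.1, α c.2)) '' C

end AFMA

/-- A `Δ`-permutation of the alphabet: a bijection fixing every distinguished letter. -/
def IsDeltaPerm {Sigma : Type} (Δ : Finset Sigma) (α : Equiv.Perm Sigma) : Prop :=
  ∀ δ ∈ Δ, α δ = δ

/-!
A letter outside `Δ` affects a transition only through its equality with the register, so acceptance
is preserved by the permutations of the alphabet that fix `Δ`. Apart from finitely many letters to
be fixed, a finite configuration set is determined up to permutation by how many letters carry each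
set of states. By Dickson's lemma, any sequence of finite configuration sets therefore has `m < n`
such that a permutation `α` carries the `n`-th set to a superset of the `m`-th. Since fewer
configurations accept more words, the `α`-renaming of a suffix accepted after the `n`-th prefix is
accepted after the `m`-th prefix. For the words `uₙ # uₙ` with `|uₙ| = n` this yields an accepted
word `uₘ # α(uₙ)`, whose second half has too many distinct letters.
-/

theorem exists_injOn_apply_eq_of_encard_fiber_le {α β ι : Type*} [Nonempty β] {c : α → ι}
    {d : β → ι} {s : Set α} (hs : s.Finite)
    (h : ∀ i, (c ⁻¹' {i}).encard ≤ (d ⁻¹' {i}).encard) :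
    ∃ f : α → β, Set.InjOn f s ∧ ∀ x ∈ s, d (f x) = c x := by
  have fiber (i : ι) : ∃ f : α → β,
      s ∩ c ⁻¹' {i} ⊆ f ⁻¹' (d ⁻¹' {i}) ∧ Set.InjOn f (s ∩ c ⁻¹' {i}) :=
    (hs.inter_of_left _).exists_injOn_of_encard_le
      ((Set.encard_le_encard Set.inter_subset_right).trans (h i))
  choose f hf hinj using fiber
  have color (x : α) (hx : x ∈ s) : d (f (c x) x) = c x := hf (c x) ⟨hx, rfl⟩
  refine ⟨fun x => f (c x) x, fun x hx y hy (hxy : f (c x) x = f (c y) y) => ?_, color⟩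
  have hc : c x = c y := by rw [← color x hx, hxy, color y hy]
  exact hinj (c x) ⟨hx, rfl⟩ ⟨hy, hc.symm⟩ (by rw [hxy, hc])

theorem exists_perm_apply_eq_of_encard_fiber_le {α ι : Type*} {c d : α → ι} {s : Set α}
    (hs : s.Finite) (h : ∀ i, (c ⁻¹' {i}).encard ≤ (d ⁻¹' {i}).encard) :
    ∃ σ : Equiv.Perm α, ∀ x ∈ s, d (σ x) = c x := by
  obtain _ | _ := isEmpty_or_nonempty α
  · exact ⟨1, fun x => isEmptyElim x⟩
  obtain ⟨f, hinj, hf⟩ := exists_injOn_apply_eq_of_encard_fiber_le hs h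
  have : Finite s := hs
  obtain ⟨σ, hσ⟩ := Equiv.Perm.exists_extending_pair ((↑) : s → α) (s.domRestrict f)
    Subtype.val_injective hinj.injective
  exact ⟨σ, fun x hx => (congrArg d (hσ ⟨x, hx⟩)).trans (hf x hx)⟩

theorem exists_lt_forall_finite_exists_perm_apply_eq {α ι : Type*} [Finite ι] (c : ℕ → α → ι) :
    ∃ m n, m < n ∧ ∀ s : Set α, s.Finite → ∃ σ : Equiv.Perm α, ∀ x ∈ s, c n (σ x) = c m x := by
  obtain ⟨m, n, hmn, hle⟩ := wellQuasiOrdered_le fun n i => (c n ⁻¹' {i}).encard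
  exact ⟨m, n, hmn, fun _ hs => exists_perm_apply_eq_of_encard_fiber_le hs hle⟩

theorem exists_nodup_length_eq_of_infinite {α : Type*} {s : Set α} (hs : s.Infinite) (n : ℕ) :
    ∃ l : List α, l.length = n ∧ l.Nodup ∧ ∀ x ∈ l, x ∈ s := by
  obtain ⟨t, ht, rfl⟩ := hs.exists_subset_card_eq n
  exact ⟨t.toList, t.length_toList, t.nodup_toList, fun x hx => ht (Finset.mem_toList.1 hx)⟩

namespace IsDeltaPerm

variable {Sigma : Type} {Δ Δ' : Finset Sigma} {α : Equiv.Perm Sigma} {x : Sigma}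

theorem mono (hα : IsDeltaPerm Δ α) (h : Δ' ⊆ Δ) : IsDeltaPerm Δ' α :=
  fun δ hδ => hα δ (h hδ)

theorem symm (hα : IsDeltaPerm Δ α) : IsDeltaPerm Δ α.symm :=
  fun δ hδ => (Equiv.symm_apply_eq α).2 (hα δ hδ).symm

theorem apply_mem_iff (hα : IsDeltaPerm Δ α) : α x ∈ Δ ↔ x ∈ Δ := by
  refine ⟨fun h => ?_, fun h => (hα x h).symm ▸ h⟩
  rwa [α.injective (hα _ h)] at h

end IsDeltaPerm

namespace AFMA

variable {Sigma S : Type} {A : AFMA Sigma S} {C D : Set (S × Sigma)} {c : S × Sigma} {σ : Sigma}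
  {u v w : List Sigma}

/-- The words that `A` accepts when started from all the configurations in `C` at once, so that
`A.Lang` is the case of the single initial configuration. -/
def acceptsFrom (A : AFMA Sigma S) (C : Set (S × Sigma)) : Set (List Sigma) :=
  {w | ∃ D, A.Steps C w D ∧ A.Accepting D}

theorem steps_append :
    A.Steps C (u ++ v) D ↔ ∃ E, A.Steps C u E ∧ A.Steps E v D := by
  constructor
  · intro h
    induction u generalizing C with
    | nil => exact ⟨C, .nil C, h⟩
    | cons σ u ih =>
      obtain _ | ⟨hstep, hsteps⟩ := h
      obtain ⟨E, hu, hv⟩ := ih hsteps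
      exact ⟨E, .cons hstep hu, hv⟩
  · rintro ⟨E, hu, hv⟩
    induction hu with
    | nil => exact hv
    | cons hstep _ ih => exact .cons hstep (ih hv)

theorem append_mem_acceptsFrom :
    u ++ v ∈ A.acceptsFrom C ↔ ∃ D, A.Steps C u D ∧ v ∈ A.acceptsFrom D := by
  constructor
  · rintro ⟨E, hE, hacc⟩
    obtain ⟨D, hu, hv⟩ := steps_append.1 hE
    exact ⟨D, hu, E, hv, hacc⟩
  · rintro ⟨D, hu, E, hv, hacc⟩
    exact ⟨E, steps_append.2 ⟨D, hu, hv⟩, hacc⟩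

theorem Steps.exists_subset {C' : Set (S × Sigma)} (h : A.Steps C w C') (hD : D ⊆ C) :
    ∃ D' ⊆ C', A.Steps D w D' := by
  induction h generalizing D with
  | nil => exact ⟨D, hD, .nil D⟩
  | cons hstep _ ih =>
    obtain ⟨g, hg, rfl⟩ := hstep
    obtain ⟨D', hD', hsteps⟩ := ih (Set.biUnion_subset_biUnion_left hD)
    exact ⟨D', hD', .cons ⟨g, fun c hc => hg c (hD hc), rfl⟩ hsteps⟩

theorem acceptsFrom_antitone (A : AFMA Sigma S) : Antitone A.acceptsFrom := by
  rintro D C hDC w ⟨C', hsteps, hacc⟩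
  obtain ⟨D', hD', hsteps'⟩ := hsteps.exists_subset hDC
  exact ⟨D', hsteps', fun c hc => hacc c (hD' hc)⟩

theorem finite_of_mem_muC [Finite S] (hD : D ∈ A.muC c σ) : D.Finite := by
  have finite_prod (Q : Set S) (x : Sigma) : (Q ×ˢ ({x} : Set Sigma)).Finite :=
    Q.toFinite.prod (Set.finite_singleton x)
  unfold muC at hD
  split_ifs at hD <;> obtain ⟨Q, _, rfl⟩ := hD
  · exact finite_prod _ _
  · exact finite_prod _ _
  · exact (finite_prod _ _).union (finite_prod _ _)

theorem Steps.finite [Finite S] (h : A.Steps C w D) (hC : C.Finite) : D.Finite := by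
  induction h with
  | nil => exact hC
  | cons hstep _ ih =>
    obtain ⟨g, hg, rfl⟩ := hstep
    exact ih (hC.biUnion fun c hc => finite_of_mem_muC (hg c hc))

theorem mapConfigs_prod_singleton (α : Equiv.Perm Sigma) (Q : Set S) (x : Sigma) :
    mapConfigs α (Q ×ˢ ({x} : Set Sigma)) = Q ×ˢ ({α x} : Set Sigma) := by
  simp only [mapConfigs, Set.prod_singleton, Set.image_image]

theorem mapConfigs_mem_muC {α : Equiv.Perm Sigma} (hα : IsDeltaPerm A.Δ α)
    (hD : D ∈ A.muC c σ) : mapConfigs α D ∈ A.muC (c.1, α c.2) (α σ) := by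
  classical
  simp only [muC, hα.apply_mem_iff, α.apply_eq_iff_eq] at hD ⊢
  split_ifs at hD ⊢ with hσ
  · obtain ⟨Q, hQ, rfl⟩ := hD
    exact ⟨Q, (hα σ hσ).symm ▸ hQ, mapConfigs_prod_singleton α _ _⟩
  · obtain ⟨Q, hQ, rfl⟩ := hD
    exact ⟨Q, hQ, mapConfigs_prod_singleton α _ _⟩
  · obtain ⟨p, hp, rfl⟩ := hD
    refine ⟨p, hp, ?_⟩
    rw [← mapConfigs_prod_singleton, ← mapConfigs_prod_singleton]
    exact Set.image_union _ _ _

theorem SetStep.map {α : Equiv.Perm Sigma} (h : A.SetStep C σ D) (hα : IsDeltaPerm A.Δ α) :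
    A.SetStep (mapConfigs α C) (α σ) (mapConfigs α D) := by
  obtain ⟨g, hg, rfl⟩ := h
  refine ⟨fun c => mapConfigs α (g (c.1, α.symm c.2)), ?_, ?_⟩
  · rintro _ ⟨c, hc, rfl⟩
    simpa only [Equiv.symm_apply_apply] using mapConfigs_mem_muC hα (hg c hc)
  · simp only [mapConfigs, Set.biUnion_image, Set.image_iUnion₂, Equiv.symm_apply_apply]

theorem Steps.map {α : Equiv.Perm Sigma} (h : A.Steps C w D) (hα : IsDeltaPerm A.Δ α) :
    A.Steps (mapConfigs α C) (w.map α) (mapConfigs α D) := by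
  induction h with
  | nil => exact .nil _
  | cons hstep _ ih => exact .cons (hstep.map hα) ih

theorem map_mem_acceptsFrom {α : Equiv.Perm Sigma} (hα : IsDeltaPerm A.Δ α)
    (hw : w ∈ A.acceptsFrom C) : w.map α ∈ A.acceptsFrom (mapConfigs α C) := by
  obtain ⟨D, hsteps, hacc⟩ := hw
  refine ⟨mapConfigs α D, hsteps.map hα, ?_⟩
  rintro _ ⟨c, hc, rfl⟩
  exact hacc c hc

theorem exists_lt_subset_mapConfigs [Finite S] (P : Finset Sigma) {C : ℕ → Set (S × Sigma)}
    (hC : ∀ n, (C n).Finite) :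
    ∃ m n, m < n ∧ ∃ α : Equiv.Perm Sigma, IsDeltaPerm P α ∧ C m ⊆ mapConfigs α (C n) := by
  -- The first component of the colour tells the letters of `P` apart, which forces `σ` to fix them.
  obtain ⟨m, n, hmn, hperm⟩ := exists_lt_forall_finite_exists_perm_apply_eq
    fun n (x : Sigma) => ({p : P | p = x}, {s | (s, x) ∈ C n})
  obtain ⟨σ, hσ⟩ := hperm (P ∪ Prod.snd '' C m) (P.finite_toSet.union ((hC m).image _))
  simp only [Prod.mk.injEq, Set.ext_iff, Set.mem_ofPred_eq] at hσ
  have fixes : IsDeltaPerm P σ := fun p hp => (((hσ p (.inl hp)).1 ⟨p, hp⟩).2 rfl).symm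
  refine ⟨m, n, hmn, σ.symm, fixes.symm, fun c hc => ⟨(c.1, σ c.2), ?_, ?_⟩⟩
  · exact ((hσ c.2 (.inr ⟨c, hc, rfl⟩)).2 c.1).2 hc
  · simp only [Equiv.symm_apply_apply]

theorem exists_lt_append_map_mem_lang [Finite S] (A : AFMA Sigma S) (P : Finset Sigma)
    {u v : ℕ → List Sigma} (h : ∀ n, u n ++ v n ∈ A.Lang) :
    ∃ m n, m < n ∧ ∃ α : Equiv.Perm Sigma, IsDeltaPerm P α ∧ u m ++ (v n).map α ∈ A.Lang := by
  classical
  choose C hu hv using fun n => append_mem_acceptsFrom.1 (h n)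
  obtain ⟨m, n, hmn, α, hα, hsub⟩ := exists_lt_subset_mapConfigs (P ∪ A.Δ)
    fun n => (hu n).finite (Set.finite_singleton _)
  refine ⟨m, n, hmn, α, hα.mono Finset.subset_union_left,
    append_mem_acceptsFrom.2 ⟨C m, hu m, A.acceptsFrom_antitone hsub ?_⟩⟩
  exact map_mem_acceptsFrom (hα.mono Finset.subset_union_right) (hv n)

end AFMA

/-- The language `L_⊇ = { ψ#ω : ψ, ω repetition-free, [ω] ⊆ [ψ], # ∉ [ψ] ∪ [ω] }`
is not accepted by any one-register alternating finite-memory automaton. -/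
theorem afma_not_L_supseteq {Sigma : Type} [Infinite Sigma] (hash : Sigma)
    (S : Type) [Fintype S] (A : AFMA Sigma S) :
    A.Lang ≠ {w | ∃ ψ ω : List Sigma,
      w = ψ ++ hash :: ω ∧ ψ.Nodup ∧ ω.Nodup ∧
      (∀ x ∈ ω, x ∈ ψ) ∧ hash ∉ ψ ∧ hash ∉ ω} := by
  intro hL
  choose u hlen hnodup hne using
    exists_nodup_length_eq_of_infinite (Set.finite_singleton hash).infinite_compl
  have hhash (n : ℕ) : hash ∉ u n := fun h => hne n hash h rfl
  have haccept (n : ℕ) : u n ++ hash :: u n ∈ A.Lang :=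
    hL ▸ ⟨u n, u n, rfl, hnodup n, hnodup n, fun _ => id, hhash n, hhash n⟩
  obtain ⟨m, n, hmn, α, hα, hmem⟩ := A.exists_lt_append_map_mem_lang {hash} haccept
  rw [hL, List.map_cons, hα hash (Finset.mem_singleton_self hash)] at hmem
  obtain ⟨ψ, ω, heq, -, hω, hωψ, hψ, hhashω⟩ := hmem
  obtain ⟨rfl, -, rfl⟩ := (List.append_cons_inj_of_notMem hψ hhashω).1 heq.symm
  have hle : n ≤ m := by simpa [hlen] using (hω.subperm hωψ).length_le
  exact hle.not_gt hmn
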